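/- arXiv:cs/0110010 — 2 statements merged into one kernel-verified Lean document; each statement's English description precedes it below -/
import Mathlib

section
/- Let (v₀¹,v₁) and (v₀²,v₂) be initialized pairs with (v₀¹,v₁) ≈ (v₀²,v₂). Then: (1) the pattern of (v₀¹,v₁) is initial iff fract(v₁) = fract(v₀¹); (2) v₁ is initial (v₁(0) = 0) iff v₂ is initial; (3) v₁ = v₀¹ iff v₂ = v₀². -/
open scoped BigOperators

namespace PTApaper

/-! ## Clock valuations -/

/-- A (raw) clock valuation on clocks `x_0, …, x_k`. -/
abbrev Val (k : ℕ) := Fin (k+1) → ℝ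

/-- A discrete clock valuation. -/
abbrev DVal (k : ℕ) := Fin (k+1) → ℕ

/-- A clock valuation takes nonnegative values. -/
def IsVal {k : ℕ} (v : Val k) : Prop := ∀ i, 0 ≤ v i

/-- A valuation is initial if the auxiliary clock `x_0` has value 0. -/
def Initial {k : ℕ} (v : Val k) : Prop := v 0 = 0

/-- The integral part `int(v)` of a valuation. -/
noncomputable def intPart {k : ℕ} (v : Val k) : DVal k := fun i => (⌊v i⌋).toNat

/-- The fractional parts of the relative representation `rel(v)`:
`fract(rel(v))(0) = fract (1 - fract (v 0))` and
`fract(rel(v))(i) = fract (fract (v i) + fract(rel(v))(0))` for `i ∈ K⁺`. -/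
noncomputable def relFract {k : ℕ} (v : Val k) : Fin (k+1) → ℝ := fun i =>
  if i = 0 then Int.fract (1 - Int.fract (v 0))
  else Int.fract (Int.fract (v i) + Int.fract (1 - Int.fract (v 0)))

/-- Synchronous clock progress `v + δ`. -/
def shift {k : ℕ} (v : Val k) (δ : ℝ) : Val k := fun i => v i + δ

/-- Clock reset `v↓_r`. -/
def resetVal {k : ℕ} (r : Finset (Fin (k+1))) (v : Val k) : Val k :=
  fun i => if i ∈ r then 0 else v i

/-! ## Patterns -/

/-- A raw pattern: a finite sequence of subsets of `K⁰ ∪ K¹`, where the index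
`(i, false)` stands for `i⁰` and `(i, true)` stands for `i¹`. -/
abbrev PatSeq (k : ℕ) := List (Finset (Fin (k+1) × Bool))

/-- The well-formedness conditions making `η = p₀,…,p_n` a pattern:
`0 ≤ n < 2(k+1)`, the `p_m` are nonempty and pairwise disjoint, `0⁰ ∈ p₀`,
and `p₀ ∪ … ∪ p_n = K⁰ ∪ K¹`. -/
def IsPattern {k : ℕ} (η : PatSeq k) : Prop :=
  η.length ≤ 2*(k+1) ∧
  (∀ p ∈ η, p.Nonempty) ∧
  η.Pairwise Disjoint ∧
  ((0 : Fin (k+1)), false) ∈ η.getD 0 ∅ ∧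
  (∀ x : Fin (k+1) × Bool, ∃ p ∈ η, x ∈ p)

/-- `bval v₀ v₁ b` is `v_b`. -/
def bval {k : ℕ} (v₀ v₁ : Val k) : Bool → Val k
  | false => v₀
  | true => v₁

/-- The defining ordering condition for "`(v₀,v₁)` has pattern `η = p₀,…,p_n`":
for all positions `m, m'`, copies `b, b'` and clocks `i, i'` with `i^b ∈ p_m` and
`i'^{b'} ∈ p_{m'}`, `fract(rel(v_b))(i) = fract(rel(v_{b'}))(i')` iff `m = m'`, and
`fract(rel(v_b))(i) < fract(rel(v_{b'}))(i')` iff `m < m'`. -/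
def HasPatternOrd {k : ℕ} (v₀ v₁ : Val k) (η : PatSeq k) : Prop :=
  ∀ m m' : Fin η.length, ∀ b b' : Bool, ∀ i i' : Fin (k+1),
    (i, b) ∈ η.get m → (i', b') ∈ η.get m' →
      ((relFract (bval v₀ v₁ b) i = relFract (bval v₀ v₁ b') i' ↔ m = m') ∧
       (relFract (bval v₀ v₁ b) i < relFract (bval v₀ v₁ b') i' ↔ (m : ℕ) < (m' : ℕ)))

/-- `(v₀,v₁)` has pattern `η` (written `[(v₀,v₁)] = η`). -/
def PatternOf {k : ℕ} (v₀ v₁ : Val k) (η : PatSeq k) : Prop :=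
  IsPattern η ∧ HasPatternOrd v₀ v₁ η

/-- A pattern is initial if it is the pattern of `(v₀,v₀)` for some initial valuation `v₀`. -/
def InitialPattern {k : ℕ} (η : PatSeq k) : Prop :=
  ∃ v₀ : Val k, IsVal v₀ ∧ Initial v₀ ∧ PatternOf v₀ v₀ η

/-- The equivalence `(v₀¹,v₁) ≈ (v₀²,v₂)`: same pattern and same integral parts. -/
def PairEquiv {k : ℕ} (va vb vc vd : Val k) : Prop :=
  (∃ η : PatSeq k, PatternOf va vb η ∧ PatternOf vc vd η) ∧
  intPart va = intPart vc ∧ intPart vb = intPart vd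

/-! ## now-position, Next, next, reset -/

/-- The index of the now-position, i.e. the position containing `0¹`. -/
def nowIdx {k : ℕ} (η : PatSeq k) : ℕ :=
  η.findIdx fun p => decide (((0 : Fin (k+1)), true) ∈ p)

/-- A merge-pattern: the now-position is the singleton `{0¹}`. -/
def IsMergePat {k : ℕ} (η : PatSeq k) : Prop :=
  η.getD (nowIdx η) ∅ = ({((0 : Fin (k+1)), true)} : Finset (Fin (k+1) × Bool))

/-- A split-pattern: a pattern that is not a merge-pattern. -/
def IsSplitPat {k : ℕ} (η : PatSeq k) : Prop := ¬ IsMergePat η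

/-- The next pattern `Next(η)`. -/
def NextPat {k : ℕ} (η : PatSeq k) : PatSeq k :=
  let i := nowIdx η
  if η.getD i ∅ = ({((0 : Fin (k+1)), true)} : Finset (Fin (k+1) × Bool)) then
    -- merge case : `p₀, …, p_{i-1} ∪ {0¹}, p_{i+1}, …, p_n`
    η.take (i-1) ++ [η.getD (i-1) ∅ ∪ {((0 : Fin (k+1)), true)}] ++ η.drop (i+1)
  else if i = 0 then
    -- split case with `i = 0` : `p₀ ∖ {0¹}, p₁, …, p_n, {0¹}`
    (η.getD 0 ∅ \ {((0 : Fin (k+1)), true)}) :: (η.drop 1 ++ [{((0 : Fin (k+1)), true)}])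
  else
    -- split case with `i > 0` : `p₀, …, p_{i-1}, {0¹}, p_i ∖ {0¹}, p_{i+1}, …, p_n`
    η.take i ++ [{((0 : Fin (k+1)), true)}, η.getD i ∅ \ {((0 : Fin (k+1)), true)}]
      ++ η.drop (i+1)

/-- The counter update of `next(η,u)`. -/
def nextD {k : ℕ} (η : PatSeq k) (u : DVal k) : DVal k :=
  let i := nowIdx η
  if η.getD i ∅ = ({((0 : Fin (k+1)), true)} : Finset (Fin (k+1) × Bool)) then
    fun j =>
      if j = 0 then (if i = 1 then u 0 + 1 else u 0)
      else (if (j, true) ∈ η.getD (i-1) ∅ then u j + 1 else u j)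
  else u

/-- `next(η,u)`. -/
def nextPair {k : ℕ} (η : PatSeq k) (u : DVal k) : PatSeq k × DVal k :=
  (NextPat η, nextD η u)

/-- The pattern part of `reset_r(η,u)`: all indices `j¹`, `j ∈ r`, are moved into the
now-position, and entries that become empty are deleted. -/
def ResetPat {k : ℕ} (r : Finset (Fin (k+1))) (η : PatSeq k) : PatSeq k :=
  let r1 : Finset (Fin (k+1) × Bool) := r.image (fun j => (j, true))
  let i := nowIdx η
  (η.mapIdx (fun m p => if m = i then p ∪ r1 else p \ r1)).filter (fun p => decide (p ≠ ∅))

/-- The counter update of `reset_r(η,u)`. -/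
def resetD {k : ℕ} (r : Finset (Fin (k+1))) (u : DVal k) : DVal k :=
  fun j => if j ∈ r then 0 else u j

/-- `reset_r(η,u)`. -/
def resetPair {k : ℕ} (r : Finset (Fin (k+1))) (η : PatSeq k) (u : DVal k) :
    PatSeq k × DVal k :=
  (ResetPat r η, resetD r u)

/-! ## Pattern changes -/

/-- `v` has no pattern change for `δ`. -/
def NoChange {k : ℕ} (v₀ v : Val k) (δ : ℝ) : Prop :=
  ∃ η : PatSeq k, PatternOf v₀ v η ∧
    ∀ δ', 0 ≤ δ' → δ' ≤ δ → PatternOf v₀ (shift v δ') η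

/-- `v` has one pattern change for `δ`. -/
def OneChange {k : ℕ} (v₀ v : Val k) (δ : ℝ) : Prop :=
  ∃ η η' : PatSeq k, PatternOf v₀ v η ∧ PatternOf v₀ (shift v δ) η' ∧
    NextPat η = η' ∧
    ((∀ δ', 0 < δ' → δ' < δ → PatternOf v₀ (shift v δ') η) ∨
     (∀ δ', 0 < δ' → δ' < δ → PatternOf v₀ (shift v δ') η'))

/-- `v` has `n` pattern changes for `δ` (for `n ≥ 1`): `δ = δ₁ + … + δ_n` with each
`δ_j > 0` and `v + δ₁ + … + δ_j` has one pattern change for `δ_{j+1}`. -/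
def NChanges {k : ℕ} (v₀ v : Val k) (n : ℕ) (δ : ℝ) : Prop :=
  ∃ d : ℕ → ℝ, (∀ j < n, 0 < d j) ∧ (∑ j ∈ Finset.range n, d j) = δ ∧
    ∀ j < n, OneChange v₀ (shift v (∑ j' ∈ Finset.range j, d j')) (d j)

/-! ## Clock constraints -/

/-- Comparison operators `<, ≤, =, ≥, >`. -/
inductive CCmp | lt | le | eq | ge | gt

/-- Evaluation of a comparison operator on reals. -/
def CCmp.evalR : CCmp → ℝ → ℝ → Prop
  | .lt, a, b => a < b
  | .le, a, b => a ≤ b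
  | .eq, a, b => a = b
  | .ge, a, b => a ≥ b
  | .gt, a, b => a > b

/-- Clock constraints over the clocks `x_1, …, x_k` (indexed by `Fin k`, clock
`x_{i+1}` for `i : Fin k`): Boolean combinations of `x_i - x_j # d` and `x_i # d`. -/
inductive CC (k : ℕ)
  | diff (i j : Fin k) (op : CCmp) (d : ℕ) : CC k
  | single (i : Fin k) (op : CCmp) (d : ℕ) : CC k
  | not (c : CC k) : CC k
  | and (c₁ c₂ : CC k) : CC k

/-- `v ∈ c` : the valuation `v` satisfies the clock constraint `c`. -/
def CC.sat {k : ℕ} (v : Val k) : CC k → Prop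
  | .diff i j op d => op.evalR (v i.succ - v j.succ) (d : ℝ)
  | .single i op d => op.evalR (v i.succ) (d : ℝ)
  | .not c => ¬ c.sat v
  | .and c₁ c₂ => c₁.sat v ∧ c₂.sat v

/-- The position (in `η`) of an index `x ∈ K⁰ ∪ K¹`. -/
def posOf {k : ℕ} (η : PatSeq k) (x : Fin (k+1) × Bool) : ℕ :=
  η.findIdx fun p => decide (x ∈ p)

/-- The truth value, given by pattern `η`, of the fractional ordering
`fract(x_a) > fract(x_b)`. -/
def fracGtP {k : ℕ} (η : PatSeq k) (a b : Fin (k+1)) : Prop :=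
  let i := posOf η ((0 : Fin (k+1)), true)
  let m₁ := posOf η (a, true)
  let m₂ := posOf η (b, true)
  (m₁ < i ∧ i ≤ m₂) ∨ (m₂ < m₁ ∧ m₁ < i) ∨ (i ≤ m₂ ∧ m₂ < m₁)

/-- The truth value, given by pattern `η`, of `fract(x_a) = fract(x_b)`. -/
def fracEqP {k : ℕ} (η : PatSeq k) (a b : Fin (k+1)) : Prop :=
  posOf η (a, true) = posOf η (b, true)

/-- The truth value, given by pattern `η`, of `fract(x_a) = 0`. -/
def fracZeroP {k : ℕ} (η : PatSeq k) (a : Fin (k+1)) : Prop :=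
  posOf η (a, true) = posOf η ((0 : Fin (k+1)), true)

/-- `u ∈ c^η` : the discrete valuation `u` satisfies the constraint `c^η`, obtained by
rewriting `c` as `I(c)` over integral parts and fractional orderings and substituting the
truth values of the fractional orderings determined by the pattern `η`. -/
def CC.satP {k : ℕ} (η : PatSeq k) (u : DVal k) : CC k → Prop
  | .diff i j op d =>
      let I : ℤ := (u i.succ : ℤ) - (u j.succ : ℤ)
      (match op with
      | .lt => I < d ∨ (I = d ∧ fracGtP η j.succ i.succ)
      | .le => I < d ∨ (I = d ∧ (fracGtP η j.succ i.succ ∨ fracEqP η i.succ j.succ))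
      | .eq => I = d ∧ fracEqP η i.succ j.succ
      | .ge => I > d ∨ (I = d ∧ (fracGtP η i.succ j.succ ∨ fracEqP η i.succ j.succ))
      | .gt => I > d ∨ (I = d ∧ fracGtP η i.succ j.succ))
  | .single i op d =>
      let I : ℤ := (u i.succ : ℤ)
      (match op with
      | .lt => I < d
      | .le => I < d ∨ (I = d ∧ fracZeroP η i.succ)
      | .eq => I = d ∧ fracZeroP η i.succ
      | .ge => I ≥ d
      | .gt => I > d ∨ (I = d ∧ ¬ fracZeroP η i.succ))
  | .not c => ¬ c.satP η u
  | .and c₁ c₂ => c₁.satP η u ∧ c₂.satP η u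

/-! ## Pushdown timed automata -/

/-- A pushdown timed automaton `⟨S, {x₁,…,x_k}, Inv, R, Γ, PD⟩`:
`Inv` assigns an invariant to each state, `R s s' = (Rc s s', Rr s s')` assigns a reset
condition and a set of clock resets (a subset of `K⁺`) to each edge, and
`PD s s' = (PDa s s', PDw s s')` assigns a stack operation to each edge. -/
structure PTA (k : ℕ) (S : Type) (Γ : Type) where
  Inv : S → CC k
  Rc : S → S → CC k
  Rr : S → S → Finset (Fin (k+1))
  hRr : ∀ s s', (0 : Fin (k+1)) ∉ Rr s s'
  PDa : S → S → Γ
  PDw : S → S → List Γ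

/-- A configuration `(s, v, w)` of a PTA. -/
abbrev Config (k : ℕ) (S Γ : Type) := S × Val k × List Γ

/-- The one-step transition relation `→_A` of a PTA. -/
def Step {k : ℕ} {S Γ : Type} (A : PTA k S Γ) (c₁ c₂ : Config k S Γ) : Prop :=
  -- progress transition
  (c₁.1 = c₂.1 ∧ c₁.2.2 = c₂.2.2 ∧
    ∃ δ : ℝ, 0 < δ ∧ c₂.2.1 = shift c₁.2.1 δ ∧
      ∀ δ', 0 ≤ δ' → δ' ≤ δ → (A.Inv c₁.1).sat (shift c₁.2.1 δ')) ∨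
  -- reset transition
  ((A.Inv c₁.1).sat c₁.2.1 ∧ (A.Rc c₁.1 c₂.1).sat c₁.2.1 ∧
    c₂.2.1 = resetVal (A.Rr c₁.1 c₂.1) c₁.2.1 ∧ (A.Inv c₂.1).sat c₂.2.1 ∧
    ∃ w : List Γ, c₁.2.2 = A.PDa c₁.1 c₂.1 :: w ∧ c₂.2.2 = A.PDw c₁.1 c₂.1 ++ w)

/-- `→*_A`, the transitive closure of `→_A`. -/
def Reach {k : ℕ} {S Γ : Type} (A : PTA k S Γ) : Config k S Γ → Config k S Γ → Prop :=
  Relation.TransGen (Step A)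

/-- `(s₀,u₀,w₀) →*_{A,η} (s₁,u₁,w₁)`. -/
def ReachPat {k : ℕ} {S Γ : Type} (A : PTA k S Γ) (η : PatSeq k)
    (s₀ : S) (u₀ : DVal k) (w₀ : List Γ) (s₁ : S) (u₁ : DVal k) (w₁ : List Γ) : Prop :=
  ∃ v₀ v₁ : Val k, IsVal v₀ ∧ IsVal v₁ ∧ v₀ 0 = 0 ∧
    intPart v₀ = u₀ ∧ intPart v₁ = u₁ ∧ PatternOf v₀ v₁ η ∧
    Reach A (s₀, v₀, w₀) (s₁, v₁, w₁)

/-! ## The pattern graph -/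

/-- A configuration `(s, η, u, w)` of the pattern graph. -/
abbrev GConfig (k : ℕ) (S Γ : Type) := S × PatSeq k × DVal k × List Γ

/-- The one-step transition relation `→_G` of the pattern graph `G` of a PTA `A`,
through progress edges, stay edges and reset edges. -/
def GStep {k : ℕ} {S Γ : Type} (A : PTA k S Γ) (c₁ c₂ : GConfig k S Γ) : Prop :=
  -- progress edge
  (c₁.1 = c₂.1 ∧ c₁.2.2.2 = c₂.2.2.2 ∧
    nextPair c₁.2.1 c₁.2.2.1 = (c₂.2.1, c₂.2.2.1) ∧
    (A.Inv c₁.1).satP c₁.2.1 c₁.2.2.1 ∧ (A.Inv c₁.1).satP c₂.2.1 c₂.2.2.1) ∨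
  -- stay edge
  (c₁ = c₂ ∧ IsMergePat c₁.2.1 ∧ (A.Inv c₁.1).satP c₁.2.1 c₁.2.2.1) ∨
  -- reset edge
  (resetPair (A.Rr c₁.1 c₂.1) c₁.2.1 c₁.2.2.1 = (c₂.2.1, c₂.2.2.1) ∧
    ((A.Rc c₁.1 c₂.1).and (A.Inv c₁.1)).satP c₁.2.1 c₁.2.2.1 ∧
    (A.Inv c₂.1).satP c₂.2.1 c₂.2.2.1 ∧
    ∃ w : List Γ, c₁.2.2.2 = A.PDa c₁.1 c₂.1 :: w ∧ c₂.2.2.2 = A.PDw c₁.1 c₂.1 ++ w)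

/-- `→*_G`, the transitive closure of `→_G`. -/
def GReach {k : ℕ} {S Γ : Type} (A : PTA k S Γ) : GConfig k S Γ → GConfig k S Γ → Prop :=
  Relation.TransGen (GStep A)

end PTApaper
namespace PTApaper

/-!
Modulo `1`, the relative representation of `v` is `-v 0` at clock `0` and `v i - v 0` at the other
clocks, so `relFract v` carries the same information as the fractional parts of `v`. A pattern
records which relative fractional parts of a pair coincide. Hence pairs with the same pattern agree
on whether their two members have the same fractional parts and, if they are initialized (so that
`0⁰` sits at `0`), on whether clock `0` of the second member is integral. Equal integral parts turn
these facts about fractional parts into facts about the valuations themselves.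
-/

section Fract

variable {R : Type*} [Ring R] [LinearOrder R] [FloorRing R] {x x' y y' : R}

theorem eq_iff_natFloor_fract (hx : 0 ≤ x) (hy : 0 ≤ y) :
    x = y ↔ ⌊x⌋₊ = ⌊y⌋₊ ∧ Int.fract x = Int.fract y := by
  refine ⟨fun h => h ▸ ⟨rfl, rfl⟩, fun ⟨hfloor, hfract⟩ => ?_⟩
  rw [← Int.floor_add_fract x, ← Int.floor_add_fract y, ← natCast_floor_eq_intCast_floor hx,
    ← natCast_floor_eq_intCast_floor hy, hfloor, hfract]

variable [IsStrictOrderedRing R]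

theorem fract_sub_congr (hx : Int.fract x = Int.fract x') (hy : Int.fract y = Int.fract y') :
    Int.fract (x - y) = Int.fract (x' - y') := by
  obtain ⟨m, hm⟩ := Int.fract_eq_fract.1 hx
  obtain ⟨n, hn⟩ := Int.fract_eq_fract.1 hy
  refine Int.fract_eq_fract.2 ⟨m - n, ?_⟩
  rw [Int.cast_sub, ← hm, ← hn, sub_sub_sub_comm]

theorem fract_neg_inj : Int.fract (-x) = Int.fract (-y) ↔ Int.fract x = Int.fract y := by
  have neg_congr {a b : R} (h : Int.fract a = Int.fract b) : Int.fract (-a) = Int.fract (-b) := by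
    simpa only [zero_sub] using fract_sub_congr (x := 0) rfl h
  exact ⟨fun h => by simpa only [neg_neg] using neg_congr h, neg_congr⟩

theorem fract_one_sub_fract (x : R) : Int.fract (1 - Int.fract x) = Int.fract (-x) := by
  rw [← zero_sub x]
  exact fract_sub_congr (Int.fract_one.trans Int.fract_zero.symm) (Int.fract_fract x)

theorem fract_fract_add_fract_neg (x y : R) :
    Int.fract (Int.fract x + Int.fract (-y)) = Int.fract (x - y) := by
  rw [← sub_neg_eq_add]
  have hy : Int.fract (-Int.fract (-y)) = Int.fract y := by
    simpa only [neg_neg] using fract_neg_inj.2 (Int.fract_fract (-y))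
  exact fract_sub_congr (Int.fract_fract x) hy

end Fract

section Valuation

variable {k : ℕ} {v w : Val k}

theorem relFract_zero (v : Val k) : relFract v 0 = Int.fract (-v 0) := by
  rw [relFract, if_pos rfl, fract_one_sub_fract]

theorem relFract_of_ne_zero (v : Val k) {i : Fin (k + 1)} (hi : i ≠ 0) :
    relFract v i = Int.fract (v i - v 0) := by
  rw [relFract, if_neg hi, fract_one_sub_fract, fract_fract_add_fract_neg]

theorem relFract_zero_eq_zero_iff : relFract v 0 = 0 ↔ Int.fract (v 0) = 0 := by
  rw [relFract_zero, Int.fract_neg_eq_zero]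

theorem relFract_eq_relFract_iff :
    relFract v = relFract w ↔ ∀ i, Int.fract (v i) = Int.fract (w i) := by
  constructor
  · intro h i
    have hzero : Int.fract (v 0) = Int.fract (w 0) := by
      simpa only [relFract_zero, fract_neg_inj] using congrFun h 0
    rcases eq_or_ne i 0 with rfl | hi
    · exact hzero
    · have hsub : Int.fract (v i - v 0) = Int.fract (w i - w 0) := by
        simpa only [relFract_of_ne_zero _ hi] using congrFun h i
      simpa only [sub_neg_eq_add, sub_add_cancel]
        using fract_sub_congr hsub (fract_neg_inj.2 hzero)
  · intro h
    funext i
    rcases eq_or_ne i 0 with rfl | hi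
    · rw [relFract_zero, relFract_zero, fract_neg_inj, h 0]
    · rw [relFract_of_ne_zero v hi, relFract_of_ne_zero w hi, fract_sub_congr (h i) (h 0)]

theorem Initial.relFract_zero_eq (h : Initial v) : relFract v 0 = 0 := by
  rw [relFract_zero_eq_zero_iff, h, Int.fract_zero]

theorem IsVal.initial_iff (hv : IsVal v) : Initial v ↔ intPart v 0 = 0 ∧ relFract v 0 = 0 := by
  rw [Initial, eq_iff_natFloor_fract (hv 0) le_rfl, relFract_zero_eq_zero_iff, intPart,
    Int.floor_toNat, Nat.floor_zero, Int.fract_zero]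

theorem IsVal.eq_iff (hv : IsVal v) (hw : IsVal w) :
    v = w ↔ intPart v = intPart w ∧ relFract v = relFract w := by
  rw [relFract_eq_relFract_iff]
  simp only [funext_iff, intPart, Int.floor_toNat, ← forall_and,
    eq_iff_natFloor_fract (hv _) (hw _)]

end Valuation

section Pattern

variable {k : ℕ} {η : PatSeq k} {u₀ u₁ v₀ v₁ : Val k}

theorem IsPattern.exists_mem_get (h : IsPattern η) (x : Fin (k + 1) × Bool) :
    ∃ m : Fin η.length, x ∈ η.get m := by
  obtain ⟨p, hp, hx⟩ := h.2.2.2.2 x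
  obtain ⟨m, rfl⟩ := List.get_of_mem hp
  exact ⟨m, hx⟩

theorem PatternOf.relFract_bval_eq_iff (hu : PatternOf u₀ u₁ η) (hv : PatternOf v₀ v₁ η)
    (b b' : Bool) (i i' : Fin (k + 1)) :
    relFract (bval u₀ u₁ b) i = relFract (bval u₀ u₁ b') i' ↔
      relFract (bval v₀ v₁ b) i = relFract (bval v₀ v₁ b') i' := by
  obtain ⟨m, hm⟩ := hu.1.exists_mem_get (i, b)
  obtain ⟨m', hm'⟩ := hu.1.exists_mem_get (i', b')
  rw [(hu.2 m m' b b' i i' hm hm').1, (hv.2 m m' b b' i i' hm hm').1]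

theorem PatternOf.relFract_apply_eq_iff (hu : PatternOf u₀ u₁ η) (hv : PatternOf v₀ v₁ η)
    (i : Fin (k + 1)) : relFract u₁ i = relFract u₀ i ↔ relFract v₁ i = relFract v₀ i :=
  hu.relFract_bval_eq_iff hv true false i i

theorem PatternOf.relFract_eq_iff (hu : PatternOf u₀ u₁ η) (hv : PatternOf v₀ v₁ η) :
    relFract u₁ = relFract u₀ ↔ relFract v₁ = relFract v₀ := by
  simp only [funext_iff, hu.relFract_apply_eq_iff hv]

theorem patternOf_congr_right (h : relFract u₁ = relFract v₁) :
    PatternOf v₀ u₁ η ↔ PatternOf v₀ v₁ η := by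
  have hbval : ∀ b, relFract (bval v₀ u₁ b) = relFract (bval v₀ v₁ b)
    | false => rfl
    | true => h
  simp only [PatternOf, HasPatternOrd, hbval]

theorem PatternOf.initialPattern_iff (h : PatternOf v₀ v₁ η) (hv₀ : IsVal v₀)
    (hinit : Initial v₀) :
    InitialPattern η ↔ ∀ i, Int.fract (v₁ i) = Int.fract (v₀ i) := by
  rw [← relFract_eq_relFract_iff]
  constructor
  · rintro ⟨u, -, -, hu⟩
    exact (hu.relFract_eq_iff h).1 rfl
  · intro hrel
    exact ⟨v₀, hv₀, hinit, (patternOf_congr_right hrel).1 h⟩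

end Pattern

/-- Lemma `initialpattern`. Let `(va,vb)` and `(vc,vd)` be initialized
pairs with `(va,vb) ≈ (vc,vd)`. Then (1) the pattern of `(va,vb)` is initial iff
`fract(vb) = fract(va)`; (2) `vb` is initial iff `vd` is initial; (3) `vb = va` iff
`vd = vc`. -/
theorem initial_pattern_lemma (k : ℕ) (hk : 1 ≤ k) (va vb vc vd : Val k)
    (hva : IsVal va) (hvb : IsVal vb) (hvc : IsVal vc) (hvd : IsVal vd)
    (h0a : Initial va) (h0c : Initial vc)
    (heq : PairEquiv va vb vc vd) :
    (∀ η : PatSeq k, PatternOf va vb η →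
      (InitialPattern η ↔ ∀ i, Int.fract (vb i) = Int.fract (va i))) ∧
    (Initial vb ↔ Initial vd) ∧
    (vb = va ↔ vd = vc) := by
  obtain ⟨⟨η, hab, hcd⟩, hint_ac, hint_bd⟩ := heq
  refine ⟨fun η' hη' => hη'.initialPattern_iff hva h0a, ?_, ?_⟩
  · have hzero : relFract vb 0 = 0 ↔ relFract vd 0 = 0 := by
      simpa only [h0a.relFract_zero_eq, h0c.relFract_zero_eq] using hab.relFract_apply_eq_iff hcd 0
    rw [hvb.initial_iff, hvd.initial_iff, hint_bd, hzero]
  · rw [hvb.eq_iff hva, hvd.eq_iff hvc, hint_ac, hint_bd, hab.relFract_eq_iff hcd]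

end PTApaper
end

section
/- For every pattern η = p₀,…,p_n there is a smallest positive integer m such that Next^m(η) = η; moreover m = 2n if η is a merge-pattern and m = 2(n+1) if η is a split-pattern, and the patterns η, Next(η), …, Next^{m−1}(η) are pairwise distinct. -/
open scoped BigOperators

namespace PTApaper

/-!
Delete `0¹` from a pattern and drop the position if it becomes empty; let `c` be the resulting
sequence. `Next` leaves `c` unchanged and only moves `0¹` to the left through it, alternately
merging it into a member of `c` and splitting it off again, and wraps around from the first member
of `c` to the end. Starting from the merge-pattern `c, {0¹}`, the now-position returns to index
`|c|` for the first time after `2|c|` steps, and the patterns passed on the way are all those which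
reduce to `c`. Hence each of them has minimal period `2|c|` under `Next`, and `|c|` is `n` for a
merge-pattern and `n + 1` for a split-pattern.
-/

open Function

lemma insert_ne_singleton_self {α : Type*} [DecidableEq α] {a : α} {s : Finset α} (ha : a ∉ s)
    (hs : s.Nonempty) : insert a s ≠ {a} := by
  obtain ⟨b, hb⟩ := hs
  intro h
  have hba : b = a := Finset.mem_singleton.1 (h ▸ Finset.mem_insert_of_mem hb)
  exact ha (hba ▸ hb)

lemma exists_append_length_right_eq {α : Type*} {l : List α} {n : ℕ} (hn : n ≤ l.length) :
    ∃ l₁ l₂, l = l₁ ++ l₂ ∧ l₂.length = n :=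
  ⟨l.take (l.length - n), l.drop (l.length - n), by simp, by simp; omega⟩

variable {k : ℕ}

/-- The index `0¹`, which marks the now-position of a pattern. -/
abbrev nowMark : Fin (k + 1) × Bool := (0, true)

/-- The condition on a sequence to be what is left of a pattern once `0¹` has been deleted from
it: its members are nonempty and do not contain `0¹`. -/
def IsCore (c : PatSeq k) : Prop := ∀ p ∈ c, nowMark ∉ p ∧ p.Nonempty

section NextPat

variable {A : PatSeq k} {p : Finset (Fin (k + 1) × Bool)}

lemma nowIdx_append_cons (hA : ∀ q ∈ A, nowMark ∉ q) (hp : nowMark ∈ p) (B : PatSeq k) :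
    nowIdx (A ++ p :: B) = A.length := by
  have hfind : A.findIdx (fun q => decide (nowMark ∈ q)) = A.length :=
    List.findIdx_eq_length.2 fun q hq => decide_eq_false (hA q hq)
  simp [nowIdx, List.findIdx_append, List.findIdx_cons, hfind, hp]

lemma isMergePat_append_cons_iff (hA : ∀ q ∈ A, nowMark ∉ q) (hp : nowMark ∈ p) (B : PatSeq k) :
    IsMergePat (A ++ p :: B) ↔ p = {nowMark} := by
  simp [IsMergePat, nowIdx_append_cons hA hp]

lemma nextPat_append_cons_singleton_nowMark (hA : ∀ q ∈ A, nowMark ∉ q) (hp : nowMark ∉ p)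
    (B : PatSeq k) :
    NextPat (A ++ p :: {nowMark} :: B) = A ++ insert nowMark p :: B := by
  have hAp : ∀ q ∈ A ++ [p], nowMark ∉ q := by
    simpa [or_imp, forall_and] using ⟨hA, hp⟩
  have hnow : nowIdx (A ++ p :: {nowMark} :: B) = A.length + 1 := by
    simpa using nowIdx_append_cons hAp (Finset.mem_singleton_self _) B
  have hdrop : (A ++ p :: {nowMark} :: B).drop (A.length + 1 + 1) = B :=
    List.drop_length_add_append 2
  simp [NextPat, hnow, hdrop, Finset.union_singleton]

lemma nextPat_append_insert_nowMark_cons (hA : ∀ q ∈ A, nowMark ∉ q) (hA₀ : A ≠ [])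
    (hp : nowMark ∉ p) (hne : p.Nonempty) (B : PatSeq k) :
    NextPat (A ++ insert nowMark p :: B) = A ++ {nowMark} :: p :: B := by
  simp [NextPat, nowIdx_append_cons hA (Finset.mem_insert_self nowMark p),
    insert_ne_singleton_self hp hne, hA₀, List.drop_append, Finset.sdiff_singleton_eq_erase,
    Finset.erase_insert hp]

lemma nextPat_insert_nowMark_cons (hp : nowMark ∉ p) (hne : p.Nonempty) (B : PatSeq k) :
    NextPat (insert nowMark p :: B) = p :: B ++ [{nowMark}] := by
  have hnow : nowIdx (insert nowMark p :: B) = 0 :=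
    nowIdx_append_cons (A := []) (by simp) (Finset.mem_insert_self _ _) B
  simp [NextPat, hnow, insert_ne_singleton_self hp hne, Finset.sdiff_singleton_eq_erase,
    Finset.erase_insert hp]

end NextPat

section Orbit

variable {A B : PatSeq k} {p : Finset (Fin (k + 1) × Bool)} {c : PatSeq k}

lemma IsCore.nowMark_notMem_left (h : IsCore (A ++ B)) : ∀ q ∈ A, nowMark ∉ q :=
  fun q hq => (h q (List.mem_append_left B hq)).1

lemma iterate_two_mul_nextPat (hA₀ : A ≠ []) (hAB : IsCore (A ++ B)) :
    NextPat^[2 * B.length] (A ++ B ++ [{nowMark}]) = A ++ {nowMark} :: B := by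
  induction B generalizing A with
  | nil => simp
  | cons p B ih =>
    obtain ⟨hp, hne⟩ := hAB p (by simp)
    have hA := hAB.nowMark_notMem_left
    have hsteps : NextPat^[2 * B.length] (A ++ p :: B ++ [{nowMark}])
        = A ++ p :: {nowMark} :: B := by
      simpa using ih (A := A ++ [p]) (by simp) (by simpa using hAB)
    rw [List.length_cons, Nat.mul_succ, Nat.add_comm, iterate_add_apply, hsteps]
    calc NextPat (NextPat (A ++ p :: {nowMark} :: B))
        = NextPat (A ++ insert nowMark p :: B) := by
          rw [nextPat_append_cons_singleton_nowMark hA hp]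
      _ = A ++ {nowMark} :: p :: B := nextPat_append_insert_nowMark_cons hA hA₀ hp hne B

lemma iterate_two_mul_add_one_nextPat (hApB : IsCore (A ++ p :: B)) :
    NextPat^[2 * B.length + 1] (A ++ p :: B ++ [{nowMark}]) = A ++ insert nowMark p :: B := by
  have heven : NextPat^[2 * B.length] (A ++ p :: B ++ [{nowMark}])
      = A ++ p :: {nowMark} :: B := by
    simpa using iterate_two_mul_nextPat (A := A ++ [p]) (B := B) (by simp) (by simpa using hApB)
  rw [iterate_succ_apply', heven]
  exact nextPat_append_cons_singleton_nowMark hApB.nowMark_notMem_left (hApB p (by simp)).1 B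

lemma isPeriodicPt_nextPat_append_nowMark (hc : IsCore c) :
    IsPeriodicPt NextPat (2 * c.length) (c ++ [{nowMark}]) := by
  rcases c with _ | ⟨p, B⟩
  · exact isPeriodicPt_zero NextPat _
  obtain ⟨hp, hne⟩ := hc p List.mem_cons_self
  have hodd : NextPat^[2 * B.length + 1] (p :: B ++ [{nowMark}]) = insert nowMark p :: B :=
    iterate_two_mul_add_one_nextPat (A := []) hc
  calc NextPat^[2 * (p :: B).length] (p :: B ++ [{nowMark}])
      = NextPat (NextPat^[2 * B.length + 1] (p :: B ++ [{nowMark}])) := by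
        rw [← iterate_succ_apply' NextPat]; rfl
    _ = p :: B ++ [{nowMark}] := by rw [hodd, nextPat_insert_nowMark_cons hp hne]

lemma nowIdx_iterate_nextPat_append_nowMark_lt (hc : IsCore c) {m : ℕ} (hm : 0 < m)
    (hmc : m < 2 * c.length) :
    nowIdx (NextPat^[m] (c ++ [{nowMark}])) < c.length := by
  obtain ⟨i, rfl | rfl⟩ := Nat.even_or_odd' m
  · obtain ⟨A, B, rfl, rfl⟩ := exists_append_length_right_eq (show i ≤ c.length by omega)
    have hA₀ : A ≠ [] := by rintro rfl; simp at hmc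
    rw [iterate_two_mul_nextPat hA₀ hc,
      nowIdx_append_cons hc.nowMark_notMem_left (Finset.mem_singleton_self _), List.length_append]
    omega
  · obtain ⟨A, B, rfl, hB⟩ := exists_append_length_right_eq (show i + 1 ≤ c.length by omega)
    obtain ⟨p, B, rfl⟩ := List.exists_cons_of_length_eq_add_one hB
    obtain rfl : B.length = i := by simpa using hB
    rw [iterate_two_mul_add_one_nextPat hc,
      nowIdx_append_cons hc.nowMark_notMem_left (Finset.mem_insert_self _ _)]
    simp

lemma minimalPeriod_nextPat_append_nowMark (hc : IsCore c) (hc₀ : c ≠ []) :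
    minimalPeriod NextPat (c ++ [{nowMark}]) = 2 * c.length := by
  have hpos : 0 < 2 * c.length := by simpa using List.length_pos_iff.2 hc₀
  have hper := isPeriodicPt_nextPat_append_nowMark hc
  refine (hper.minimalPeriod_le hpos).antisymm (le_of_not_gt fun hlt => ?_)
  have hreturn := nowIdx_iterate_nextPat_append_nowMark_lt hc (hper.minimalPeriod_pos hpos) hlt
  have hstart : nowIdx (c ++ [{nowMark}]) = c.length :=
    nowIdx_append_cons (fun q hq => (hc q hq).1) (Finset.mem_singleton_self _) []
  rw [iterate_minimalPeriod, hstart] at hreturn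
  exact hreturn.false

lemma minimalPeriod_iterate_nextPat_append_nowMark (hc : IsCore c) (hc₀ : c ≠ []) (m : ℕ) :
    minimalPeriod NextPat (NextPat^[m] (c ++ [{nowMark}])) = 2 * c.length := by
  have hpos : 0 < 2 * c.length := by simpa using List.length_pos_iff.2 hc₀
  have hmem : c ++ [{nowMark}] ∈ periodicPts NextPat :=
    mk_mem_periodicPts hpos (isPeriodicPt_nextPat_append_nowMark hc)
  rw [minimalPeriod_apply_iterate hmem, minimalPeriod_nextPat_append_nowMark hc hc₀]

end Orbit

section Pattern

variable {η : PatSeq k}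

lemma IsPattern.exists_eq_append_cons (hη : IsPattern η) :
    ∃ A p B, η = A ++ p :: B ∧ nowMark ∈ p ∧ IsCore (A ++ B) := by
  obtain ⟨-, hne, hdisj, -, hcover⟩ := hη
  obtain ⟨p, hp, hnow⟩ := hcover nowMark
  obtain ⟨A, B, rfl⟩ := List.append_of_mem hp
  refine ⟨A, p, B, rfl, hnow, fun q hq => ⟨fun hq' => ?_, hne q (by grind)⟩⟩
  have hpq : Disjoint p q :=
    (List.pairwise_cons.1 ((List.pairwise_middle fun h => h.symm).1 hdisj)).1 q hq
  exact Finset.disjoint_left.1 hpq hnow hq'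

lemma IsPattern.exists_eq_append_of_isMergePat (hη : IsPattern η) (hmerge : IsMergePat η) :
    ∃ A B, η = A ++ {nowMark} :: B ∧ A ≠ [] ∧ IsCore (A ++ B) := by
  obtain ⟨A, p, B, rfl, hnow, hcore⟩ := hη.exists_eq_append_cons
  obtain rfl := (isMergePat_append_cons_iff hcore.nowMark_notMem_left hnow B).1 hmerge
  refine ⟨A, B, rfl, ?_, hcore⟩
  rintro rfl
  have hzero : ((0 : Fin (k + 1)), false) ∈ ({nowMark} : Finset _) := hη.2.2.2.1
  simp at hzero

lemma IsPattern.exists_eq_append_of_isSplitPat (hη : IsPattern η) (hsplit : IsSplitPat η) :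
    ∃ A p B, η = A ++ insert nowMark p :: B ∧ IsCore (A ++ p :: B) := by
  obtain ⟨A, p, B, rfl, hnow, hcore⟩ := hη.exists_eq_append_cons
  have hp : p ≠ {nowMark} :=
    fun h => hsplit ((isMergePat_append_cons_iff hcore.nowMark_notMem_left hnow B).2 h)
  have hne : (p.erase nowMark).Nonempty := by
    rw [Finset.nonempty_iff_ne_empty, Ne, Finset.erase_eq_empty_iff]
    exact not_or.2 ⟨Finset.ne_empty_of_mem hnow, hp⟩
  refine ⟨A, p.erase nowMark, B, by rw [Finset.insert_erase hnow], fun q hq => ?_⟩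
  have hq' : q = p.erase nowMark ∨ q ∈ A ++ B := by grind
  rcases hq' with rfl | hq'
  · exact ⟨Finset.notMem_erase _ _, hne⟩
  · exact hcore q hq'

lemma IsPattern.minimalPeriod_of_isMergePat (hη : IsPattern η) (hmerge : IsMergePat η) :
    minimalPeriod NextPat η = 2 * (η.length - 1) := by
  obtain ⟨A, B, rfl, hA₀, hcore⟩ := hη.exists_eq_append_of_isMergePat hmerge
  have hperiod := minimalPeriod_iterate_nextPat_append_nowMark hcore (by simp [hA₀]) (2 * B.length)
  rw [iterate_two_mul_nextPat hA₀ hcore] at hperiod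
  simpa using hperiod

lemma IsPattern.minimalPeriod_of_isSplitPat (hη : IsPattern η) (hsplit : IsSplitPat η) :
    minimalPeriod NextPat η = 2 * η.length := by
  obtain ⟨A, p, B, rfl, hcore⟩ := hη.exists_eq_append_of_isSplitPat hsplit
  have hperiod := minimalPeriod_iterate_nextPat_append_nowMark hcore (by simp) (2 * B.length + 1)
  rw [iterate_two_mul_add_one_nextPat hcore] at hperiod
  simpa using hperiod

lemma IsPattern.minimalPeriod_pos (hη : IsPattern η) : 0 < minimalPeriod NextPat η := by
  by_cases hmerge : IsMergePat η
  · rw [hη.minimalPeriod_of_isMergePat hmerge]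
    obtain ⟨A, B, rfl, hA₀, -⟩ := hη.exists_eq_append_of_isMergePat hmerge
    simp [List.length_pos_iff.2 hA₀]
  · rw [hη.minimalPeriod_of_isSplitPat hmerge]
    obtain ⟨A, p, B, rfl, -⟩ := hη.exists_eq_append_of_isSplitPat hmerge
    simp

end Pattern

/-- For every pattern `η = p₀,…,p_n` there is a smallest positive `m`
with `Next^m(η) = η`; moreover `m = 2n` if `η` is a merge-pattern and `m = 2(n+1)` if `η`
is a split-pattern, and `η, Next(η), …, Next^{m-1}(η)` are pairwise distinct. -/
theorem pattern_ring (k : ℕ) (hk : 1 ≤ k) (η : PatSeq k) (hη : IsPattern η) :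
    ∃ m : ℕ, 0 < m ∧ NextPat^[m] η = η ∧
      (∀ m' : ℕ, 0 < m' → NextPat^[m'] η = η → m ≤ m') ∧
      (IsMergePat η → m = 2 * (η.length - 1)) ∧
      (IsSplitPat η → m = 2 * η.length) ∧
      (∀ a b : ℕ, a < m → b < m → NextPat^[a] η = NextPat^[b] η → a = b) :=
  ⟨minimalPeriod NextPat η, hη.minimalPeriod_pos, iterate_minimalPeriod,
    fun _ hm' hper => IsPeriodicPt.minimalPeriod_le hm' hper,
    hη.minimalPeriod_of_isMergePat, hη.minimalPeriod_of_isSplitPat,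
    fun _ _ ha hb heq => iterate_injOn_Iio_minimalPeriod ha hb heq⟩

end PTApaper
end
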